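/- Let D be a non-dictatorial, unidimensional domain. The following are equivalent: (1) there exists a two-voter rule f : D^2 → A that is invariant, tops-only and strategy-proof; (2) D is a semi-single-peaked domain; (3) there exist a tree T on A and x̄ ∈ A such that the two-voter projection rule f : D^2 → A on T w.r.t. x̄ is strategy-proof. -/

import Mathlib

open Classical

/-- A strict preference over `A`, represented as a ranking bijection:
`P k` is the `(k+1)`-th ranked alternative. -/
abbrev Pref (A : Type*) [Fintype A] := Fin (Fintype.card A) ≃ A

variable {A : Type*} [Fintype A] [DecidableEq A] [Nonempty A]

/-- `rk P k` : the `(k+1)`-th ranked alternative of `P` (0-indexed, so `rk P 0 = r₁(P)`). -/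
noncomputable def rk (P : Pref A) (k : ℕ) : A :=
  if h : k < Fintype.card A then P ⟨k, h⟩ else Classical.arbitrary A

/-- The peak `r₁(P)`. -/
noncomputable def peak (P : Pref A) : A := rk P 0

/-- The second-ranked alternative `r₂(P)`. -/
noncomputable def second (P : Pref A) : A := rk P 1

/-- `a` is strictly preferred to `b` under `P`. -/
def prefers (P : Pref A) (a b : A) : Prop := P.symm a < P.symm b

/-- Two preferences are completely reversed. -/
def Reversed (P P' : Pref A) : Prop := ∀ a b : A, prefers P a b ↔ prefers P' b a

/-- A profile lies in the domain `D`. -/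
def InDom (D : Set (Pref A)) {n : ℕ} (P : Fin n → Pref A) : Prop := ∀ i, P i ∈ D

/-- Unanimity (an SCF satisfying it is called a rule). -/
def IsRule (D : Set (Pref A)) {n : ℕ} (f : (Fin n → Pref A) → A) : Prop :=
  ∀ P : Fin n → Pref A, InDom D P → ∀ a : A, (∀ i, peak (P i) = a) → f P = a

/-- Strategy-proofness (relative to the domain `D`). -/
def StrategyProof (D : Set (Pref A)) {n : ℕ} (f : (Fin n → Pref A) → A) : Prop :=
  ∀ P : Fin n → Pref A, InDom D P → ∀ i : Fin n, ∀ Q ∈ D,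
    f P = f (Function.update P i Q) ∨ prefers (P i) (f P) (f (Function.update P i Q))

/-- The tops-only property. -/
def TopsOnly (D : Set (Pref A)) {n : ℕ} (f : (Fin n → Pref A) → A) : Prop :=
  ∀ P P' : Fin n → Pref A, InDom D P → InDom D P' →
    (∀ i, peak (P i) = peak (P' i)) → f P = f P'

/-- Anonymity. -/
def Anonymous (D : Set (Pref A)) {n : ℕ} (f : (Fin n → Pref A) → A) : Prop :=
  ∀ P : Fin n → Pref A, InDom D P → ∀ σ : Equiv.Perm (Fin n), f (P ∘ σ) = f P

/-- `f` behaves like a dictatorship on `B`. -/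
def DictatorOn (D : Set (Pref A)) {n : ℕ} (f : (Fin n → Pref A) → A) (B : Set A) : Prop :=
  ∃ i : Fin n, ∀ P : Fin n → Pref A, InDom D P → (∀ j, peak (P j) ∈ B) → f P = peak (P i)

/-- `f` is a dictatorship. -/
def Dictatorship (D : Set (Pref A)) {n : ℕ} (f : (Fin n → Pref A) → A) : Prop :=
  DictatorOn D f Set.univ

/-- A dictatorial domain. -/
def DictatorialDomain (D : Set (Pref A)) : Prop :=
  ∀ n : ℕ, 2 ≤ n → ∀ f : (Fin n → Pref A) → A,
    IsRule D f → StrategyProof D f → Dictatorship D f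

/-- A tops-only domain. -/
def TopsOnlyDomain (D : Set (Pref A)) : Prop :=
  ∀ n : ℕ, 2 ≤ n → ∀ f : (Fin n → Pref A) → A,
    IsRule D f → StrategyProof D f → TopsOnly D f

/-- Adjacency of two alternatives relative to the domain `D`. -/
def DomAdjacent (D : Set (Pref A)) (a b : A) : Prop :=
  ∃ P ∈ D, ∃ P' ∈ D, peak P = a ∧ second P = b ∧ peak P' = b ∧ second P' = a ∧
    ∀ k : ℕ, 2 ≤ k → rk P k = rk P' k

/-- The adjacency graph `G_∼` of the domain `D`. -/
noncomputable def adjGraph (D : Set (Pref A)) : SimpleGraph A :=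
  SimpleGraph.fromRel (DomAdjacent D)

/-- Path-connectedness of the domain. -/
def PathConnectedDom (D : Set (Pref A)) : Prop := (adjGraph D).Connected

/-- Diversity: the domain contains two completely reversed preferences. -/
def Diversity (D : Set (Pref A)) : Prop := ∃ P ∈ D, ∃ P' ∈ D, Reversed P P'

/-- `S(D^a)`: the set of alternatives second-ranked in some preference of `D` with peak `a`. -/
def secondsSet (D : Set (Pref A)) (a : A) : Set A := {b | ∃ P ∈ D, peak P = a ∧ second P = b}

/-- Leaf symmetry. -/
def LeafSymmetry (D : Set (Pref A)) : Prop :=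
  ∀ x : A, (∃! y, (adjGraph D).Adj x y) →
    (∃ u ∈ secondsSet D x, ∃ v ∈ secondsSet D x, u ≠ v) →
    ∃ z ∈ secondsSet D x, ¬ (adjGraph D).Adj x z ∧ x ∈ secondsSet D z

/-- Unidimensionality: path-connectedness, diversity and leaf symmetry. -/
def Unidimensional (D : Set (Pref A)) : Prop :=
  PathConnectedDom D ∧ Diversity D ∧ LeafSymmetry D

/-- The unique seconds property. -/
def UniqueSeconds (D : Set (Pref A)) : Prop := ∃ x b : A, secondsSet D x = {b}

/-- Minimal richness. -/
def MinimallyRich (D : Set (Pref A)) : Prop := ∀ a : A, ∃ P ∈ D, peak P = a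

/-- The vertex set `⟨x, y|T⟩` of the (in a tree, unique) shortest path between `x` and `y`. -/
def intv (T : SimpleGraph A) (x y : A) : Set A :=
  {z | T.dist x z + T.dist z y = T.dist x y}

/-- `a'` is the projection of `a` onto `B` in `T`. -/
def IsProjPt (T : SimpleGraph A) (B : Set A) (a a' : A) : Prop :=
  a' ∈ B ∧ ∀ b ∈ B, a' ∈ intv T a b

/-- The projection `Proj(a, B)` of `a` onto a path-closed set `B` in the tree `T`. -/
noncomputable def projOn (T : SimpleGraph A) (B : Set A) (a : A) : A :=
  if h : ∃ a', IsProjPt T B a a' then h.choose else a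

/-- `Γ(P)`: the vertex set of the minimal subtree of `T` spanning all the peaks. -/
def gammaSet (T : SimpleGraph A) {n : ℕ} (P : Fin n → Pref A) : Set A :=
  {c | ∃ i j : Fin n, c ∈ intv T (peak (P i)) (peak (P j))}

/-- The projection rule on `T` w.r.t. `xbar`. -/
noncomputable def projRule (T : SimpleGraph A) (xbar : A) {n : ℕ}
    (P : Fin n → Pref A) : A :=
  projOn T (gammaSet T P) xbar

/-- Single-peakedness on a tree. -/
def SinglePeaked (T : SimpleGraph A) (P : Pref A) : Prop :=
  ∀ c d : A, c ≠ d → c ∈ intv T (peak P) d → prefers P c d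

/-- Semi-single-peakedness on `T` w.r.t. the threshold `xbar`. -/
def SemiSP (T : SimpleGraph A) (xbar : A) (P : Pref A) : Prop :=
  (∀ c d : A, c ∈ intv T (peak P) xbar → d ∈ intv T (peak P) xbar → c ≠ d →
    c ∈ intv T (peak P) d → prefers P c d) ∧
  (∀ c : A, c ∉ intv T (peak P) xbar →
    prefers P (projOn T (intv T (peak P) xbar) c) c)

/-- A semi-single-peaked domain. -/
def SemiSPDomain (D : Set (Pref A)) : Prop :=
  ∃ (T : SimpleGraph A) (xbar : A), T.IsTree ∧
    D ⊆ {P | SemiSP T xbar P} ∧ (adjGraph D).Connected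

/-- `A^{a⇀b}`: the alternatives whose path to `b` goes through `a`. -/
def sideSet (T : SimpleGraph A) (a b : A) : Set A := {z | a ∈ intv T z b}

/-- `x = max^P(B)`: `x` is `P`'s best alternative of `B`. -/
def IsBestOf (P : Pref A) (x : A) (B : Set A) : Prop :=
  x ∈ B ∧ ∀ y ∈ B, y ≠ x → prefers P x y

/-- `a` and `b` are dual-thresholds in the tree `T`. -/
def DualThresholds (T : SimpleGraph A) (a b : A) : Prop :=
  a ≠ b ∧ ∀ c : A, c ∉ intv T a b →
    projOn T (intv T a b) c = a ∨ projOn T (intv T a b) c = b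

/-- An `(a,b)`-semi-hybrid preference on `T`. -/
def SemiHybridPref (T : SimpleGraph A) (a b : A) (P : Pref A) : Prop :=
  (peak P ∈ sideSet T a b \ {a} → SemiSP T a P ∧ IsBestOf P b (sideSet T b a)) ∧
  (peak P ∈ sideSet T b a \ {b} → SemiSP T b P ∧ IsBestOf P a (sideSet T a b)) ∧
  (peak P ∈ intv T a b → IsBestOf P a (sideSet T a b) ∧ IsBestOf P b (sideSet T b a))

/-- `x` is a leaf of the subgraph of `G` induced on `B`. -/
def IsLeafOn (G : SimpleGraph A) (B : Set A) (x : A) : Prop :=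
  x ∈ B ∧ ∃! y, y ∈ B ∧ G.Adj x y

/-- `D` is an `(a,b)`-semi-hybrid domain on the tree `T`. -/
def SemiHybridDomainOn (D : Set (Pref A)) (T : SimpleGraph A) (a b : A) : Prop :=
  T.IsTree ∧ DualThresholds T a b ∧ D ⊆ {P | SemiHybridPref T a b P} ∧
  (adjGraph D).Connected ∧
  (¬ ∃ (T' : SimpleGraph A) (a' b' : A), T'.IsTree ∧ DualThresholds T' a' b' ∧
      D ⊆ {P | SemiHybridPref T' a' b' P} ∧ intv T' a' b' ⊂ intv T a b) ∧
  ((adjGraph D).IsTree →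
    ∀ x : A, IsLeafOn (adjGraph D) (intv T a b) x →
      ∃ P ∈ D, ¬ SemiSP (adjGraph D) x P)

/-- `D` is a semi-hybrid domain. -/
def SemiHybridDomain (D : Set (Pref A)) : Prop :=
  ∃ (T : SimpleGraph A) (a b : A), SemiHybridDomainOn D T a b

/-- An `(a,b)`-hybrid preference on `T`. -/
def HybridPref (T : SimpleGraph A) (a b : A) (P : Pref A) : Prop :=
  (∀ y z : A, ((y ∈ sideSet T a b ∧ z ∈ sideSet T a b) ∨
      (y ∈ sideSet T b a ∧ z ∈ sideSet T b a)) → y ≠ z →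
    y ∈ intv T (peak P) z → prefers P y z) ∧
  (peak P ∈ sideSet T a b \ {a} → IsBestOf P a (intv T a b)) ∧
  (peak P ∈ sideSet T b a \ {b} → IsBestOf P b (intv T a b))

/-- `D` is an `(a,b)`-hybrid domain on the tree `T`. -/
def HybridDomainOn (D : Set (Pref A)) (T : SimpleGraph A) (a b : A) : Prop :=
  T.IsTree ∧ DualThresholds T a b ∧ D ⊆ {P | HybridPref T a b P} ∧
  (adjGraph D).Connected ∧
  (¬ ∃ (T' : SimpleGraph A) (a' b' : A), T'.IsTree ∧ DualThresholds T' a' b' ∧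
      D ⊆ {P | HybridPref T' a' b' P} ∧ intv T' a' b' ⊂ intv T a b) ∧
  3 ≤ (intv T a b).ncard

/-- `f` is an `(a,b)`-hybrid rule on the tree `T`. -/
def IsHybridRule (D : Set (Pref A)) {n : ℕ} (f : (Fin n → Pref A) → A)
    (T : SimpleGraph A) (a b : A) : Prop :=
  T.IsTree ∧ DualThresholds T a b ∧ 3 ≤ (intv T a b).ncard ∧
  ∃ i : Fin n, ∀ P : Fin n → Pref A, InDom D P →
    (peak (P i) ∈ intv T a b → f P = peak (P i)) ∧
    (peak (P i) ∈ sideSet T a b \ {a} → f P = projOn T (gammaSet T P) a) ∧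
    (peak (P i) ∈ sideSet T b a \ {b} → f P = projOn T (gammaSet T P) b)

/-- The PNT rule on `T` w.r.t. the edge `(x, y)`, with the two distinguished voters `i, j`. -/
noncomputable def pntRule (T : SimpleGraph A) (x y : A) {n : ℕ} (i j : Fin n)
    (P : Fin n → Pref A) : A :=
  if peak (P i) ∈ sideSet T y x then peak (P i)
  else if peak (P j) ∈ sideSet T x y then projOn T (gammaSet T P) x
  else if prefers (P j) x y then x else y

/-- `(x, y)` is a critical spot in `T` for the domain `D`. -/
def CriticalSpot (D : Set (Pref A)) (T : SimpleGraph A) (x y : A) : Prop :=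
  T.Adj x y ∧
  (∀ P ∈ D, peak P ∈ sideSet T x y → SemiSP T y P) ∧
  (∀ P ∈ D, peak P ∈ sideSet T y x → IsBestOf P x (sideSet T x y)) ∧
  (∃ P ∈ D, ∃ P' ∈ D, peak P = peak P' ∧ peak P ∈ sideSet T y x ∧
    prefers P y x ∧ prefers P' x y)

/-- `x` is a path in the graph `G` (pairwise distinct, consecutive vertices adjacent). -/
def IsPathIn (G : SimpleGraph A) {v : ℕ} (x : Fin v → A) : Prop :=
  Function.Injective x ∧
  ∀ (k : ℕ) (h : k + 1 < v), G.Adj (x ⟨k, Nat.lt_of_succ_lt h⟩) (x ⟨k + 1, h⟩)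

/-- `x` is a cycle in the graph `G`. -/
def IsCycleIn (G : SimpleGraph A) {v : ℕ} (x : Fin v → A) : Prop :=
  Function.Injective x ∧
  (∀ (k : ℕ) (h : k + 1 < v), G.Adj (x ⟨k, Nat.lt_of_succ_lt h⟩) (x ⟨k + 1, h⟩)) ∧
  ∀ (h : 0 < v), G.Adj (x ⟨v - 1, Nat.sub_lt h Nat.one_pos⟩) (x ⟨0, h⟩)

/-- The line `L^A` induced by the ranking of the preference `P`. -/
noncomputable def lineOf (P : Pref A) : SimpleGraph A :=
  SimpleGraph.fromRel (fun a b =>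
    ∃ k : ℕ, k + 1 < Fintype.card A ∧ rk P k = a ∧ rk P (k + 1) = b)

/-- The median of three natural numbers. -/
def med3 (a b c : ℕ) : ℕ := max (min a b) (min (max a b) c)

/-- The two-voter profile in which voter `i` reports `Pi` and the other voter reports `Q`. -/
noncomputable def prof2 (i : Fin 2) (Pi Q : Pref A) : Fin 2 → Pref A :=
  Function.update (fun _ => Q) i Pi

/-!
Write the outcome of a two-voter rule as `F x y`, a function of the two peaks. As one peak moves
along an edge of `G_∼`, strategy-proofness forces the outcome either to stay put or to move along
that same edge. If moreover the two reversed preferences yield the same outcome `c` in either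
order, then neither voter can profit from leaving `c` under either preference, so `c` becomes
absorbing: either voter can enforce it. On a cycle of `G_∼` the rule would follow one of the two
voters, whom the other could not overrule by enforcing `c`; hence `G_∼` is a tree. It follows that
`F x y` is the projection of `y` onto the path from `x` to `c`, and the strategy-proofness
inequalities for this `F` contain semi-single-peakedness with respect to `c`.

Conversely, the projection of `x̄` onto the path between two peaks is the median of the peaks and
`x̄`. A voter who misreports can only move it towards `x̄`, or to a point whose projection onto the
path from the true peak to `x̄` is the old outcome; under a semi-single-peaked preference both are
losses.
-/

/-! ### Intervals in connected graphs and trees -/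

section Intervals

variable {V : Type*} {G T : SimpleGraph V} {B : Set V} {a b u v x y z : V}

theorem intv_comm (G : SimpleGraph V) (x y : V) : intv G x y = intv G y x := by
  ext z
  simp only [intv, Set.mem_ofPred_eq, G.dist_comm (u := y), G.dist_comm (u := z) (v := x)]
  omega

theorem left_mem_intv (G : SimpleGraph V) (x y : V) : x ∈ intv G x y := by simp [intv]

theorem right_mem_intv (G : SimpleGraph V) (x y : V) : y ∈ intv G x y := by simp [intv]

theorem mem_intv_of_mem_support {p : G.Walk x y} (hp : p.length = G.dist x y)
    (hz : z ∈ p.support) : z ∈ intv G x y := by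
  obtain ⟨q, r, rfl⟩ := p.mem_support_iff_exists_append.1 hz
  have hq : q.length = G.dist x z :=
    SimpleGraph.length_eq_dist_of_subwalk hp ⟨.nil, r, by simp⟩
  have hr : r.length = G.dist z y :=
    SimpleGraph.length_eq_dist_of_subwalk hp ⟨q, .nil, by simp⟩
  simp only [intv, Set.mem_ofPred_eq, ← hq, ← hr, ← hp, SimpleGraph.Walk.length_append]

theorem intv_self (hG : G.Connected) (x : V) : intv G x x = {x} := by
  ext z
  simp [intv, hG.dist_eq_zero_iff, eq_comm]

theorem intv_subset_intv_right (hG : G.Connected) (ha : a ∈ intv G x y) :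
    intv G a y ⊆ intv G x y := by
  intro b hb
  have := hG.dist_triangle (u := x) (v := a) (w := b)
  have := hG.dist_triangle (u := x) (v := b) (w := y)
  simp only [intv, Set.mem_ofPred_eq] at *
  omega

theorem intv_subset_intv_left (hG : G.Connected) (ha : a ∈ intv G x y) :
    intv G x a ⊆ intv G x y := by
  rw [intv_comm G x a, intv_comm G x y]
  exact intv_subset_intv_right hG (intv_comm G x y ▸ ha)

theorem mem_intv_of_mem_intv_right (hG : G.Connected) (ha : a ∈ intv G x y)
    (hb : b ∈ intv G a y) : a ∈ intv G x b := by
  have := hG.dist_triangle (u := x) (v := a) (w := b)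
  have := hG.dist_triangle (u := x) (v := b) (w := y)
  simp only [intv, Set.mem_ofPred_eq] at *
  omega

theorem mem_intv_of_mem_intv_left (hG : G.Connected) (ha : a ∈ intv G x y)
    (hb : b ∈ intv G x a) : a ∈ intv G b y := by
  rw [intv_comm] at *
  exact mem_intv_of_mem_intv_right hG ha hb

theorem eq_of_mem_intv_of_mem_intv (hG : G.Connected) (hz : z ∈ intv G x y)
    (hxz : a ∈ intv G x z) (hzy : a ∈ intv G z y) : a = z := by
  have hza : z ∈ intv G a a :=
    mem_intv_of_mem_intv_left hG (mem_intv_of_mem_intv_right hG hz hzy) hxz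
  rw [intv_self hG] at hza
  exact hza.symm

theorem exists_mem_intv_ne_ne_of_not_adj (hG : G.Connected) (hxy : x ≠ y) (hadj : ¬ G.Adj x y) :
    ∃ w ∈ intv G x y, w ≠ x ∧ w ≠ y := by
  obtain ⟨p, hp⟩ := hG.exists_walk_length_eq_dist x y
  cases p with
  | nil => exact absurd rfl hxy
  | cons hxv q =>
    refine ⟨_, mem_intv_of_mem_support hp (by simp), hxv.ne', ?_⟩
    rintro rfl
    exact hadj hxv

theorem exists_mem_forall_mem_intv_eq (hG : G.Connected) (hB : B.Nonempty) (x : V) :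
    ∃ c ∈ B, ∀ z ∈ B, z ∈ intv G x c → z = c := by
  obtain ⟨c, hc, hmin⟩ := exists_minimalFor_of_wellFoundedLT (· ∈ B) (G.dist x) hB
  refine ⟨c, hc, fun z hz hzc => hG.dist_eq_zero_iff.1 ?_⟩
  have := hmin hz
  simp only [intv, Set.mem_ofPred_eq] at hzc
  omega

theorem length_eq_dist_of_isPath (hT : T.IsTree) {p : T.Walk x y} (hp : p.IsPath) :
    p.length = T.dist x y := by
  obtain ⟨q, hq, hlen⟩ := hT.connected.exists_path_of_dist x y
  rw [(hT.existsUnique_path x y).unique hp hq, hlen]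

theorem mem_intv_of_forall_eq (hT : T.IsTree)
    (h : ∀ a ∈ intv T x y, a ∈ intv T y z → a = y) : y ∈ intv T x z := by
  obtain ⟨p, hp, hplen⟩ := hT.connected.exists_path_of_dist x y
  obtain ⟨q, hq, hqlen⟩ := hT.connected.exists_path_of_dist y z
  have hpq : (p.append q).IsPath := by
    rw [SimpleGraph.Walk.isPath_def, SimpleGraph.Walk.support_append, List.nodup_append']
    refine ⟨hp.support_nodup, hq.support_nodup.tail, fun a hap haq => ?_⟩
    have hay := h a (mem_intv_of_mem_support hplen hap)
      (mem_intv_of_mem_support hqlen (List.mem_of_mem_tail haq))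
    have hnodup := hq.support_nodup
    rw [← q.cons_tail_support, List.nodup_cons] at hnodup
    exact hnodup.1 (hay ▸ haq)
  exact mem_intv_of_mem_support (length_eq_dist_of_isPath hT hpq) (by simp)

theorem mem_support_of_mem_intv (hT : T.IsTree) {p : T.Walk x y} (hp : p.IsPath)
    (hz : z ∈ intv T x y) : z ∈ p.support := by
  obtain ⟨q, hq⟩ := hT.connected.exists_walk_length_eq_dist x z
  obtain ⟨r, hr⟩ := hT.connected.exists_walk_length_eq_dist z y
  have hqr : (q.append r).IsPath :=
    SimpleGraph.Walk.isPath_of_length_eq_dist _ <| by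
      rw [SimpleGraph.Walk.length_append, hq, hr]
      exact hz
  rw [(hT.existsUnique_path x y).unique hp hqr]
  simp

theorem mem_intv_left_or_right (hT : T.IsTree) (hu : u ∈ intv T x y) (hv : v ∈ intv T x y) :
    v ∈ intv T x u ∨ v ∈ intv T u y := by
  obtain ⟨p, hp⟩ := (hT.existsUnique_path x y).exists
  obtain ⟨q, r, hq, hr, rfl⟩ :=
    hp.mem_support_iff_exists_append.1 (mem_support_of_mem_intv hT hp hu)
  exact ((q.mem_support_append_iff r).1 (mem_support_of_mem_intv hT hp hv)).imp
    (mem_intv_of_mem_support (length_eq_dist_of_isPath hT hq))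
    (mem_intv_of_mem_support (length_eq_dist_of_isPath hT hr))

end Intervals

/-! ### Projections onto path-closed sets -/

section Projections

variable {V : Type*} {G T : SimpleGraph V} {B : Set V} {c c' c'' m p q x : V}

/-- A set of vertices that contains every geodesic between two of its points: on a tree, the
path-closed sets onto which `Proj` is defined. -/
def PathClosed (G : SimpleGraph V) (B : Set V) : Prop :=
  ∀ u ∈ B, ∀ v ∈ B, intv G u v ⊆ B

theorem pathClosed_intv (hT : T.IsTree) (x y : V) : PathClosed T (intv T x y) := by
  intro u hu v hv
  rcases mem_intv_left_or_right hT hu hv with h | h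
  · rw [intv_comm]
    exact (intv_subset_intv_right hT.connected h).trans (intv_subset_intv_left hT.connected hu)
  · exact (intv_subset_intv_left hT.connected h).trans (intv_subset_intv_right hT.connected hu)

theorem PathClosed.exists_isProjPt (hB : PathClosed T B) (hT : T.IsTree) (hne : B.Nonempty)
    (c : V) : ∃ c', IsProjPt T B c c' := by
  obtain ⟨c', hc', hentry⟩ := exists_mem_forall_mem_intv_eq hT.connected hne c
  exact ⟨c', hc', fun b hb => mem_intv_of_forall_eq hT fun a hac hab =>
    hentry a (hB c' hc' b hb hab) hac⟩

theorem IsProjPt.unique (h : IsProjPt G B c c') (h' : IsProjPt G B c c'') (hG : G.Connected) :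
    c' = c'' :=
  (eq_of_mem_intv_of_mem_intv hG (h.2 c'' h'.1) (h'.2 c' h.1) (right_mem_intv ..)).symm

theorem isProjPt_self (hc : c ∈ B) : IsProjPt G B c c :=
  ⟨hc, fun b _ => left_mem_intv G c b⟩

theorem isProjPt_singleton (G : SimpleGraph V) (b c : V) : IsProjPt G {b} c b :=
  ⟨rfl, fun _ hb => hb ▸ right_mem_intv G c b⟩

theorem isProjPt_intv_of_mem_intv (hT : T.IsTree) (hpq : m ∈ intv T p q) (hpx : m ∈ intv T p x)
    (hqx : m ∈ intv T q x) (hc : c ∈ intv T q m) : IsProjPt T (intv T p x) c m := by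
  refine ⟨hpx, fun b hb => ?_⟩
  have hqb : m ∈ intv T q b := by
    rcases mem_intv_left_or_right hT hpx hb with hbm | hbm
    · exact mem_intv_of_mem_intv_right hT.connected (intv_comm T p q ▸ hpq)
        (intv_comm T p m ▸ hbm)
    · exact mem_intv_of_mem_intv_right hT.connected hqx hbm
  exact mem_intv_of_mem_intv_left hT.connected hqb hc

variable [Fintype V]

theorem isProjPt_projOn_intv (hT : T.IsTree) (x y c : V) :
    IsProjPt T (intv T x y) c (projOn T (intv T x y) c) := by
  have h := (pathClosed_intv hT x y).exists_isProjPt hT ⟨x, left_mem_intv T x y⟩ c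
  rw [projOn, dif_pos h]
  exact h.choose_spec

theorem IsProjPt.projOn_eq (h : IsProjPt G B c c') (hG : G.Connected) : projOn G B c = c' := by
  have hex : ∃ c', IsProjPt G B c c' := ⟨c', h⟩
  rw [projOn, dif_pos hex]
  exact hex.choose_spec.unique h hG

end Projections

/-! ### Maps that fix or collapse edges -/

section EdgewiseRules

variable {V : Type*} {G H : SimpleGraph V} {g : V → V} {F : V → V → V} {C : Set V}
  {c x y z : V}

/-- Moving along an edge either leaves the value of `g` unchanged or moves it from one end of the
edge to the other. For a strategy-proof rule this describes the outcome as a function of the peak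
of one voter. -/
def FixesOrCollapses (G : SimpleGraph V) (g : V → V) : Prop :=
  ∀ ⦃x y⦄, G.Adj x y → g x = g y ∨ (g x = x ∧ g y = y)

namespace FixesOrCollapses

theorem mono (hg : FixesOrCollapses G g) (hHG : H ≤ G) : FixesOrCollapses H g :=
  fun _ _ hxy => hg (hHG hxy)

theorem eq_of_notMem_support (hg : FixesOrCollapses G g) (p : G.Walk x y)
    (hx : g x ∉ p.support) : g x = g y := by
  induction p with
  | nil => rfl
  | cons huv q ih =>
    simp only [SimpleGraph.Walk.support_cons, List.mem_cons, not_or] at hx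
    have hstep := (hg huv).resolve_right fun h => hx.1 h.1
    rw [hstep] at hx ⊢
    exact ih hx.2

theorem mem_intv_of_ne (hg : FixesOrCollapses G g) (hG : G.Connected) (hne : g x ≠ g y) :
    g x ∈ intv G x y := by
  obtain ⟨p, hp⟩ := hG.exists_walk_length_eq_dist x y
  by_contra hx
  exact hne (hg.eq_of_notMem_support p fun h => hx (mem_intv_of_mem_support hp h))

theorem mem_intv_of_fixed (hg : FixesOrCollapses G g) (hG : G.Connected) (hy : g y = y) (x : V) :
    g x ∈ intv G x y := by
  by_cases hxy : g x = g y
  · rw [hxy, hy]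
    exact right_mem_intv G x y
  · exact hg.mem_intv_of_ne hG hxy

theorem apply_apply (hg : FixesOrCollapses G g) (hG : G.Connected) (hy : g y = y) (x : V) :
    g (g x) = g x := by
  obtain ⟨p⟩ := hG.preconnected x y
  induction p with
  | nil => rw [hy, hy]
  | cons huv _ ih =>
    rcases hg huv with h | h
    · rw [h, ih hy]
    · rw [h.1, h.1]

theorem fixed_of_mem_intv (hg : FixesOrCollapses G g) (hG : G.Connected) (hx : g x = x)
    (hy : g y = y) (hz : z ∈ intv G x y) : g z = z :=
  eq_of_mem_intv_of_mem_intv hG hz (intv_comm G z x ▸ hg.mem_intv_of_fixed hG hx z)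
    (hg.mem_intv_of_fixed hG hy z)

theorem eq_of_mem_intv (hg : FixesOrCollapses G g) (hG : G.Connected) (hxy : g x = g y)
    (hz : z ∈ intv G x y) : g z = g x := by
  by_contra hzx
  have hzz : g z = z := eq_of_mem_intv_of_mem_intv hG hz
    (intv_comm G z x ▸ hg.mem_intv_of_ne hG hzx)
    (hg.mem_intv_of_ne hG (hxy ▸ hzx))
  have hxz : g x = z := eq_of_mem_intv_of_mem_intv hG hz
    (hg.mem_intv_of_ne hG (Ne.symm hzx))
    (intv_comm G y z ▸ hxy ▸ hg.mem_intv_of_ne hG (hxy ▸ Ne.symm hzx))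
  exact hzx (hzz.trans hxz.symm)

theorem eq_id_or_const_on_intv (hg : FixesOrCollapses G g) (hHG : H ≤ G) (hH : H.Connected)
    (hadj : G.Adj x y) :
    (∀ z ∈ intv H x y, g z = z) ∨ ∀ z ∈ intv H x y, ∀ w ∈ intv H x y, g z = g w := by
  rcases hg hadj with hxy | ⟨hx, hy⟩
  · refine .inr fun z hz w hw => ?_
    rw [(hg.mono hHG).eq_of_mem_intv hH hxy hz, (hg.mono hHG).eq_of_mem_intv hH hxy hw]
  · exact .inl fun z hz => (hg.mono hHG).fixed_of_mem_intv hH hx hy hz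

end FixesOrCollapses

theorem eq_left_or_eq_right_of_id_or_const (hC : 2 < C.encard) (hidem : ∀ x ∈ C, F x x = x)
    (hrow : ∀ x ∈ C, (∀ y ∈ C, F x y = y) ∨ ∀ y ∈ C, ∀ z ∈ C, F x y = F x z)
    (hcol : ∀ y ∈ C, (∀ x ∈ C, F x y = x) ∨ ∀ x ∈ C, ∀ z ∈ C, F x y = F z y) :
    (∀ x ∈ C, ∀ y ∈ C, F x y = x) ∨ ∀ x ∈ C, ∀ y ∈ C, F x y = y := by
  by_cases hid : ∀ x ∈ C, ∀ y ∈ C, F x y = y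
  · exact .inr hid
  push Not at hid
  obtain ⟨a, ha, b, hb, hab⟩ := hid
  have harow : ∀ y ∈ C, F a y = a := fun y hy => by
    rw [((hrow a ha).resolve_left fun h => hab (h b hb)) y hy a ha, hidem a ha]
  have hcolid : ∀ y ∈ C, y ≠ a → ∀ x ∈ C, F x y = x := fun y hy hya =>
    (hcol y hy).resolve_right fun h => hya <| by
      rw [← hidem y hy, h y hy a ha, harow y hy]
  refine .inl fun x hx y hy => ?_
  obtain ⟨t, ⟨htC, ht⟩⟩ : (C \ {a, x}).Nonempty := by
    by_contra hempty
    rw [Set.not_nonempty_iff_eq_empty, Set.sdiff_eq_empty] at hempty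
    have hpair : ({a, x} : Set V).encard ≤ 1 + 1 := by
      simpa using Set.encard_insert_le {x} a
    exact (hC.trans_le ((Set.encard_le_encard hempty).trans hpair)).ne (by norm_num)
  simp only [Set.mem_insert_iff, Set.mem_singleton_iff, not_or] at ht
  have hxt : F x t = x := hcolid t htC ht.1 x hx
  have hxrow := (hrow x hx).resolve_left fun h => ht.2 ((h t htC).symm.trans hxt)
  rw [hxrow y hy t htC, hxt]

/-- A unanimous rule for two voters on the vertices of `G`, each of whose one-voter sections
fixes or collapses every edge. -/
structure EdgewiseRule (G : SimpleGraph V) (F : V → V → V) : Prop where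
  unanimous : ∀ x, F x x = x
  left : ∀ y, FixesOrCollapses G (F · y)
  right : ∀ x, FixesOrCollapses G (F x)

/-- The outcome `c` is enforced by either voter alone. -/
def IsAbsorbing (F : V → V → V) (c : V) : Prop :=
  ∀ x, F x c = c ∧ F c x = c

theorem IsAbsorbing.flip (hc : IsAbsorbing F c) : IsAbsorbing (flip F) c :=
  fun x => (hc x).symm

namespace EdgewiseRule

theorem flip (hF : EdgewiseRule G F) : EdgewiseRule G (flip F) :=
  ⟨hF.unanimous, hF.right, hF.left⟩

theorem mono (hF : EdgewiseRule G F) (hHG : H ≤ G) : EdgewiseRule H F :=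
  ⟨hF.unanimous, fun y => (hF.left y).mono hHG, fun x => (hF.right x).mono hHG⟩

theorem not_eq_left_of_isAbsorbing (hF : EdgewiseRule G F) (hG : G.Connected)
    (hc : IsAbsorbing F c) (hC : C.Nontrivial) : ¬ ∀ x ∈ C, ∀ y ∈ C, F x y = x := by
  intro hdict
  obtain ⟨y, hy, hentry⟩ := exists_mem_forall_mem_intv_eq hG hC.nonempty c
  obtain ⟨x, hx, hxy⟩ := hC.exists_ne y
  have hxc : x ∉ intv G c y := fun h => hxy (hentry x hx h)
  have hconst : F x y = F x c := by
    by_contra hne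
    have := (hF.right x).mem_intv_of_ne hG hne
    rw [hdict x hx y hy, intv_comm] at this
    exact hxc this
  rw [hdict x hx y hy, (hc x).1] at hconst
  exact hxc (hconst ▸ left_mem_intv G c y)

theorem isAcyclic_of_isAbsorbing (hF : EdgewiseRule G F) (hG : G.Connected)
    (hc : IsAbsorbing F c) : G.IsAcyclic := by
  rw [SimpleGraph.isAcyclic_iff_forall_adj_isBridge]
  intro x y hadj
  by_contra hbridge
  -- The interval between `x` and `y` after deleting the edge `xy` closes up to a cycle, on which
  -- every one-voter section of `F` is the identity or constant.
  set H := G.deleteEdges {s(x, y)}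
  have hHG : H ≤ G := G.deleteEdges_le _
  have hH : H.Connected := hG.connected_delete_edge_of_not_isBridge hbridge
  obtain ⟨w, hw, hwx, hwy⟩ :=
    exists_mem_intv_ne_ne_of_not_adj hH hadj.ne (by simp [H, SimpleGraph.deleteEdges_adj])
  have hthree : 2 < (intv H x y).encard := by
    have hsub : {w, x, y} ⊆ intv H x y := by
      simp [Set.insert_subset_iff, hw, left_mem_intv, right_mem_intv]
    have hcard : ({w, x, y} : Set V).encard = 3 :=
      Set.encard_eq_three.2 ⟨w, x, y, hwx, hwy, hadj.ne, rfl⟩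
    exact lt_of_lt_of_le (by rw [hcard]; norm_num) (Set.encard_le_encard hsub)
  have hnontrivial : (intv H x y).Nontrivial := ⟨w, hw, x, left_mem_intv H x y, hwx⟩
  rcases eq_left_or_eq_right_of_id_or_const hthree (fun z _ => hF.unanimous z)
    (fun z _ => (hF.right z).eq_id_or_const_on_intv hHG hH hadj)
    (fun z _ => (hF.left z).eq_id_or_const_on_intv hHG hH hadj) with hdict | hdict
  · exact (hF.mono hHG).not_eq_left_of_isAbsorbing hH hc hnontrivial hdict
  · exact (hF.mono hHG).flip.not_eq_left_of_isAbsorbing hH hc.flip hnontrivial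
      fun u hu v hv => hdict v hv u hu

theorem eq_of_mem_intv_of_isAbsorbing (hF : EdgewiseRule G F) (hG : G.Connected)
    (hc : IsAbsorbing F c) (hz : z ∈ intv G x c) : F x z = z :=
  (hF.right x).fixed_of_mem_intv hG (hF.unanimous x) (hc x).1 hz

theorem eq_of_isProjPt (hF : EdgewiseRule G F) (hG : G.Connected) (hc : IsAbsorbing F c)
    (hz : IsProjPt G (intv G x c) y z) : F x y = z := by
  have hxz : F x z = z := hF.eq_of_mem_intv_of_isAbsorbing hG hc hz.1
  have hzy : F z y = z :=
    hF.flip.eq_of_mem_intv_of_isAbsorbing hG hc.flip (hz.2 c (right_mem_intv G x c))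
  have hmem_x : F x y ∈ intv G x z := (hF.left y).mem_intv_of_fixed hG hzy x
  have hmem_y : F x y ∈ intv G y z := (hF.right x).mem_intv_of_fixed hG hxz y
  exact eq_of_mem_intv_of_mem_intv hG (hz.2 x (left_mem_intv G x c)) hmem_y
    (intv_comm G x z ▸ hmem_x)

end EdgewiseRule

end EdgewiseRules

/-! ### Preferences and one-voter sections of rules -/

section Preferences

variable {α : Type*} [Fintype α] [Nonempty α] {D : Set (Pref α)} {P P' : Pref α}
  {a c u v x y : α} {g : α → α} {F : α → α → α}

theorem rk_eq_iff {k : ℕ} (hk : k < Fintype.card α) : rk P k = a ↔ (P.symm a : ℕ) = k := by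
  rw [rk, dif_pos hk, ← Equiv.eq_symm_apply, eq_comm, Fin.ext_iff]

theorem symm_apply_eq_of_forall_rk_eq (htail : ∀ k, 2 ≤ k → rk P k = rk P' k)
    (ha : 2 ≤ (P.symm a : ℕ)) : (P'.symm a : ℕ) = P.symm a := by
  have hlt : (P.symm a : ℕ) < Fintype.card α := (P.symm a).isLt
  rw [← rk_eq_iff hlt, ← htail _ ha, rk_eq_iff hlt]

theorem eq_peak_and_eq_peak_of_prefers (hsecond : second P = peak P')
    (htail : ∀ k, 2 ≤ k → rk P k = rk P' k) (huv : prefers P u v) (hvu : prefers P' v u) :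
    u = peak P ∧ v = peak P' := by
  have htop : (P.symm u : ℕ) = 0 ∧ (P.symm v : ℕ) = 1 := by
    have htail' : ∀ k, 2 ≤ k → rk P' k = rk P k := fun k hk => (htail k hk).symm
    have := symm_apply_eq_of_forall_rk_eq htail (a := u)
    have := symm_apply_eq_of_forall_rk_eq htail (a := v)
    have := symm_apply_eq_of_forall_rk_eq htail' (a := u)
    have := symm_apply_eq_of_forall_rk_eq htail' (a := v)
    simp only [prefers, Fin.lt_def] at huv hvu
    omega
  have hu : peak P = u := (rk_eq_iff (htop.1 ▸ (P.symm u).isLt)).2 htop.1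
  have hv : second P = v := (rk_eq_iff (htop.2 ▸ (P.symm v).isLt)).2 htop.2
  exact ⟨hu.symm, hv.symm.trans hsecond⟩

theorem domAdjacent_of_adj (h : (adjGraph D).Adj x y) : DomAdjacent D x y := by
  rw [adjGraph, SimpleGraph.fromRel_adj] at h
  rcases h.2 with h | ⟨P, hP, P', hP', hpeak, hsecond, hpeak', hsecond', htail⟩
  · exact h
  · exact ⟨P', hP', P, hP, hpeak', hsecond', hpeak, hsecond, fun k hk => (htail k hk).symm⟩

theorem PathConnectedDom.minimallyRich (hG : PathConnectedDom D) (hD : D.Nonempty) :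
    MinimallyRich D := by
  intro a
  cases subsingleton_or_nontrivial α with
  | inl _ =>
    obtain ⟨P, hP⟩ := hD
    exact ⟨P, hP, Subsingleton.elim _ _⟩
  | inr _ =>
    obtain ⟨b, hab⟩ := hG.preconnected.exists_adj_of_nontrivial a
    obtain ⟨P, hP, _, _, hpeak, _⟩ := domAdjacent_of_adj hab
    exact ⟨P, hP, hpeak⟩

/-- Reporting the true peak to `g` is optimal for every preference in `D`: strategy-proofness of
one voter of a tops-only rule, `g` being the outcome as a function of the peak of that voter. -/
def PeakTruthful (D : Set (Pref α)) (g : α → α) : Prop :=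
  ∀ P ∈ D, ∀ y, g (peak P) = g y ∨ prefers P (g (peak P)) (g y)

theorem PeakTruthful.fixesOrCollapses (hg : PeakTruthful D g) :
    FixesOrCollapses (adjGraph D) g := by
  intro x y hxy
  obtain ⟨P, hP, P', hP', rfl, hsecond, rfl, _, htail⟩ := domAdjacent_of_adj hxy
  rcases hg P hP (peak P') with heq | hpref
  · exact .inl heq
  rcases hg P' hP' (peak P) with heq | hpref'
  · exact .inl heq.symm
  exact .inr (eq_peak_and_eq_peak_of_prefers hsecond htail hpref hpref')

theorem PeakTruthful.eq_of_reversed (hg : PeakTruthful D g) (hP : P ∈ D) (hP' : P' ∈ D)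
    (hrev : Reversed P P') (hc : g (peak P) = c) (hc' : g (peak P') = c) (y : α) : g y = c := by
  rcases hg P hP y with heq | hpref
  · exact heq.symm.trans hc
  rcases hg P' hP' y with heq | hpref'
  · exact heq.symm.trans hc'
  rw [hc] at hpref
  rw [hc', ← hrev] at hpref'
  exact absurd hpref (lt_asymm hpref')

/-- A two-voter tops-only, unanimous and strategy-proof rule on `D`, as a function of the two
peaks. -/
structure PeakRule (D : Set (Pref α)) (F : α → α → α) : Prop where
  unanimous : ∀ x, F x x = x
  left : ∀ y, PeakTruthful D (F · y)
  right : ∀ x, PeakTruthful D (F x)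

theorem exists_peakRule {f : (Fin 2 → Pref α) → α} (hrich : MinimallyRich D) (hrule : IsRule D f)
    (htops : TopsOnly D f) (hsp : StrategyProof D f) :
    ∃ F, PeakRule D F ∧ ∀ P ∈ D, ∀ Q ∈ D, f ![P, Q] = F (peak P) (peak Q) := by
  choose R hR hpeak using hrich
  have hdom : ∀ P ∈ D, ∀ Q ∈ D, InDom D ![P, Q] := fun P hP Q hQ =>
    Fin.forall_fin_two.2 ⟨hP, hQ⟩
  have hF : ∀ P ∈ D, ∀ Q ∈ D, f ![P, Q] = f ![R (peak P), R (peak Q)] := fun P hP Q hQ =>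
    htops _ _ (hdom P hP Q hQ) (hdom _ (hR _) _ (hR _))
      (Fin.forall_fin_two.2 ⟨(hpeak _).symm, (hpeak _).symm⟩)
  refine ⟨fun x y => f ![R x, R y], ⟨fun x => ?_, fun y P hP x => ?_, fun x P hP y => ?_⟩, hF⟩
  · exact hrule _ (hdom _ (hR x) _ (hR x)) x (Fin.forall_fin_two.2 ⟨hpeak x, hpeak x⟩)
  · have h := hsp _ (hdom P hP _ (hR y)) 0 _ (hR x)
    have hupdate : Function.update ![P, R y] 0 (R x) = ![R x, R y] := by
      ext i : 1
      fin_cases i <;> simp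
    rwa [hupdate, hF P hP _ (hR y), hpeak] at h
  · have h := hsp _ (hdom _ (hR x) P hP) 1 _ (hR y)
    have hupdate : Function.update ![R x, P] 1 (R y) = ![R x, R y] := by
      ext i : 1
      fin_cases i <;> simp
    rwa [hupdate, hF _ (hR x) P hP, hpeak] at h

namespace PeakRule

theorem edgewiseRule (hF : PeakRule D F) : EdgewiseRule (adjGraph D) F :=
  ⟨hF.unanimous, fun y => (hF.left y).fixesOrCollapses, fun x => (hF.right x).fixesOrCollapses⟩

theorem isAbsorbing (hF : PeakRule D F) (hG : PathConnectedDom D) (hP : P ∈ D) (hP' : P' ∈ D)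
    (hrev : Reversed P P') (hinv : F (peak P) (peak P') = F (peak P') (peak P)) :
    IsAbsorbing F (F (peak P) (peak P')) := by
  have hrow : ∀ x y, F x (F x y) = F x y := fun x y =>
    (hF.right x).fixesOrCollapses.apply_apply hG (hF.unanimous x) y
  have hcol : ∀ x y, F (F x y) y = F x y := fun x y =>
    (hF.left y).fixesOrCollapses.apply_apply hG (hF.unanimous y) x
  refine fun x => ⟨?_, ?_⟩
  · refine (hF.left _).eq_of_reversed hP hP' hrev (hrow _ _) ?_ x
    simp only [hinv, hrow]
  · refine (hF.right _).eq_of_reversed hP hP' hrev ?_ (hcol _ _) x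
    simp only [hinv, hcol]

theorem semiSP (hF : PeakRule D F) (hT : (adjGraph D).IsTree) (hc : IsAbsorbing F c)
    (hP : P ∈ D) : SemiSP (adjGraph D) c P := by
  have hE := hF.edgewiseRule
  have hG := hT.connected
  refine ⟨fun u v hu hv huv huv' => ?_, fun u hu => ?_⟩
  · have hpu : F (peak P) u = u := hE.eq_of_mem_intv_of_isAbsorbing hG hc hu
    have hvu : F v u = v := hE.flip.eq_of_mem_intv_of_isAbsorbing hG hc.flip
      (mem_intv_of_mem_intv_left hG hv huv')
    simpa only [hpu, hvu, huv, false_or] using hF.left u P hP v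
  · have hproj := isProjPt_projOn_intv hT (peak P) c u
    have hpu := hE.eq_of_isProjPt hG hc hproj
    have hne : projOn (adjGraph D) (intv (adjGraph D) (peak P) c) u ≠ u :=
      fun h => hu (h ▸ hproj.1)
    simpa only [hpu, hF.unanimous, hne, false_or] using hF.left u P hP u

end PeakRule

theorem semiSPDomain_of_isRule {f : (Fin 2 → Pref α) → α} (hG : PathConnectedDom D) (hP : P ∈ D)
    (hP' : P' ∈ D) (hrev : Reversed P P') (hrule : IsRule D f) (htops : TopsOnly D f)
    (hsp : StrategyProof D f) (hinv : f ![P, P'] = f ![P', P]) : SemiSPDomain D := by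
  obtain ⟨F, hF, hfF⟩ := exists_peakRule (hG.minimallyRich ⟨P, hP⟩) hrule htops hsp
  rw [hfF P hP P' hP', hfF P' hP' P hP] at hinv
  have hc := hF.isAbsorbing hG hP hP' hrev hinv
  have hT : (adjGraph D).IsTree := ⟨hG, hF.edgewiseRule.isAcyclic_of_isAbsorbing hG hc⟩
  exact ⟨adjGraph D, _, hT, fun Q hQ => hF.semiSP hT hc hQ, hG⟩

end Preferences

/-! ### Projection rules -/

section ProjectionRules

variable {α : Type*} [Fintype α] {D : Set (Pref α)} {T : SimpleGraph α} {n : ℕ}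

theorem Anonymous.eq_swap {P P' : Pref α} {f : (Fin 2 → Pref α) → α} (hf : Anonymous D f)
    (hP : P ∈ D) (hP' : P' ∈ D) : f ![P, P'] = f ![P', P] := by
  have hswap : ![P', P] ∘ Equiv.swap 0 1 = ![P, P'] := by
    ext i : 1
    fin_cases i <;> simp
  rw [← hswap]
  exact hf _ (Fin.forall_fin_two.2 ⟨hP', hP⟩) _

variable [Nonempty α]

theorem SemiSP.eq_or_prefers_of_isProjPt {P : Pref α} {x q r m m' : α} (hP : SemiSP T x P)
    (hT : T.IsTree) (hm : IsProjPt T (intv T (peak P) q) x m)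
    (hm' : IsProjPt T (intv T r q) x m') : m = m' ∨ prefers P m m' := by
  have hG := hT.connected
  have hpx : m ∈ intv T (peak P) x := intv_comm T x _ ▸ hm.2 _ (left_mem_intv ..)
  have hqx : m ∈ intv T q x := intv_comm T x q ▸ hm.2 q (right_mem_intv ..)
  have hqx' : m' ∈ intv T q x := intv_comm T x q ▸ hm'.2 q (right_mem_intv ..)
  rcases mem_intv_left_or_right hT hqx hqx' with hqm | hmx
  · have hproj := isProjPt_intv_of_mem_intv hT hm.1 hpx hqx hqm
    by_cases hpx' : m' ∈ intv T (peak P) x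
    · exact .inl (hproj.unique (isProjPt_self hpx') hG)
    · exact .inr (hproj.projOn_eq hG ▸ hP.2 m' hpx')
  · exact or_iff_not_imp_left.2 fun hne => hP.1 m m' hpx (intv_subset_intv_right hG hpx hmx) hne
      (mem_intv_of_mem_intv_right hG hpx hmx)

theorem gammaSet_eq_intv (hT : T.Connected) (P : Fin 2 → Pref α) {i j : Fin 2} (hij : i ≠ j) :
    gammaSet T P = intv T (peak (P i)) (peak (P j)) := by
  refine Set.Subset.antisymm ?_ fun c hc => ⟨i, j, hc⟩
  rintro c ⟨k, l, hc⟩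
  have hvoters : ∀ k, k = i ∨ k = j := by omega
  rcases hvoters k with rfl | rfl <;> rcases hvoters l with rfl | rfl
  · rw [intv_self hT] at hc
    exact hc ▸ left_mem_intv ..
  · exact hc
  · exact intv_comm T _ _ ▸ hc
  · rw [intv_self hT] at hc
    exact hc ▸ right_mem_intv ..

theorem strategyProof_projRule_of_semiSP {x : α} (hT : T.IsTree) (hD : ∀ P ∈ D, SemiSP T x P) :
    StrategyProof D (fun P : Fin 2 → Pref α => projRule T x P) := by
  intro P hP i Q _
  obtain ⟨j, hji⟩ := exists_ne i
  simp only [projRule, gammaSet_eq_intv hT.connected _ hji.symm, Function.update_self,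
    Function.update_of_ne hji]
  exact (hD _ (hP i)).eq_or_prefers_of_isProjPt hT (isProjPt_projOn_intv hT _ _ x)
    (isProjPt_projOn_intv hT _ _ x)

theorem isRule_projRule [NeZero n] (hT : T.Connected) (D : Set (Pref α)) (x : α) :
    IsRule D (fun P : Fin n → Pref α => projRule T x P) := by
  intro P _ a hpeak
  have hgamma : gammaSet T P = {a} := by simp [gammaSet, hpeak, intv_self hT]
  simp only [projRule, hgamma]
  exact (isProjPt_singleton T a x).projOn_eq hT

theorem topsOnly_projRule (T : SimpleGraph α) (D : Set (Pref α)) (x : α) :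
    TopsOnly D (fun P : Fin n → Pref α => projRule T x P) := by
  intro P P' _ _ hpeak
  simp only [projRule, gammaSet, hpeak]

theorem anonymous_projRule (T : SimpleGraph α) (D : Set (Pref α)) (x : α) :
    Anonymous D (fun P : Fin n → Pref α => projRule T x P) := by
  intro P _ σ
  have hgamma : gammaSet T (P ∘ σ) = gammaSet T P := by
    ext c
    simp only [gammaSet, Set.mem_ofPred_eq, Function.comp_apply]
    exact σ.exists_congr fun i => σ.exists_congr fun j => Iff.rfl
  simp only [projRule, hgamma]

end ProjectionRules

theorem stmt1_invariance_classification_general {α : Type*} [Fintype α] [Nonempty α]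
    (D : Set (Pref α)) (hG : PathConnectedDom D) (Pl Pu : Pref α) (hPl : Pl ∈ D) (hPu : Pu ∈ D)
    (hrev : Reversed Pl Pu) :
    List.TFAE [
      ∃ f : (Fin 2 → Pref α) → α,
        IsRule D f ∧ TopsOnly D f ∧ StrategyProof D f ∧ f ![Pl, Pu] = f ![Pu, Pl],
      SemiSPDomain D,
      ∃ (T : SimpleGraph α) (xbar : α), T.IsTree ∧
        StrategyProof D (fun P : Fin 2 → Pref α => projRule T xbar P)] := by
  tfae_have 1 → 2 := by
    rintro ⟨f, hrule, htops, hsp, hinv⟩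
    exact semiSPDomain_of_isRule hG hPl hPu hrev hrule htops hsp hinv
  tfae_have 2 → 3 := by
    rintro ⟨T, x, hT, hD, _⟩
    exact ⟨T, x, hT, strategyProof_projRule_of_semiSP hT hD⟩
  tfae_have 3 → 1 := by
    rintro ⟨T, x, hT, hsp⟩
    exact ⟨_, isRule_projRule hT.connected D x, topsOnly_projRule T D x, hsp,
      (anonymous_projRule T D x).eq_swap hPl hPu⟩
  tfae_finish

/-- on a non-dictatorial, unidimensional domain, existence of an
invariant, tops-only and strategy-proof two-voter rule is equivalent to being a
semi-single-peaked domain, and to the existence of a strategy-proof two-voter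
projection rule. -/
theorem stmt1_invariance_classification (D : Set (Pref A)) (hD : D.Nonempty)
    (hcard : 3 ≤ Fintype.card A) (huni : Unidimensional D)
    (hnd : ¬ DictatorialDomain D)
    (Pl Pu : Pref A) (hPl : Pl ∈ D) (hPu : Pu ∈ D) (hrev : Reversed Pl Pu) :
    ((∃ f : (Fin 2 → Pref A) → A,
        IsRule D f ∧ TopsOnly D f ∧ StrategyProof D f ∧ f ![Pl, Pu] = f ![Pu, Pl]) ↔
      SemiSPDomain D) ∧
    ((∃ f : (Fin 2 → Pref A) → A,
        IsRule D f ∧ TopsOnly D f ∧ StrategyProof D f ∧ f ![Pl, Pu] = f ![Pu, Pl]) ↔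
      ∃ (T : SimpleGraph A) (xbar : A), T.IsTree ∧
        StrategyProof D (fun P : Fin 2 → Pref A => projRule T xbar P)) := by
  have h := stmt1_invariance_classification_general D huni.1 Pl Pu hPl hPu hrev
  exact ⟨h.out 0 1, h.out 0 2⟩
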